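/- Let z₁, z₂, z₃ be nonzero complex numbers with z₁z₂z₃ = 1 and let n₁ ≥ n₂ ≥ n₃ ≥ 1 be integers. For j = 1, 2, 3 set A_j = ℂ[t^{±1}]/((t − z_j)^{n_j}) and let η_j ∈ A_j be the class of 1. Then for all nonnegative integers k₁, k₂, k₃ with k₁ + k₂ + k₃ ≥ n₂ + n₃ − 1, the class of (t − z₁)^{k₁}η₁ ⊗ (t − z₂)^{k₂}η₂ ⊗ (t − z₃)^{k₃}η₃ in the quotient (A₁ ⊗_ℂ A₂ ⊗_ℂ A₃)/H is zero. -/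

import Mathlib

open LaurentPolynomial TensorProduct

set_option synthInstance.maxHeartbeats 1000000
set_option maxHeartbeats 1000000
noncomputable section

abbrev LQuot (K : Type) [Field K] (p : LaurentPolynomial K) : Type :=
  LaurentPolynomial K ⧸ Ideal.span {p}

/-- The class of a Laurent polynomial in the quotient by `(p)`. -/
def clsOf (K : Type) [Field K] (p x : LaurentPolynomial K) : LQuot K p :=
  Ideal.Quotient.mk (Ideal.span {p}) x

abbrev Trip (K : Type) [Field K] (p q r : LaurentPolynomial K) : Type :=
  (LQuot K p ⊗[K] LQuot K q) ⊗[K] LQuot K r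

instance (K : Type) [Field K] (p q r : LaurentPolynomial K) : AddCommGroup (Trip K p q r) :=
  TensorProduct.addCommGroup

/-- The holonomy subspace: the `K`-span of the elements
`β₁ ⊗ β₂ ⊗ β₃ - tβ₁ ⊗ tβ₂ ⊗ tβ₃`. -/
def holSub (K : Type) [Field K] (p q r : LaurentPolynomial K) :
    Submodule K (Trip K p q r) :=
  Submodule.span K { x | ∃ (a : LQuot K p) (b : LQuot K q) (c : LQuot K r),
    x = (a ⊗ₜ[K] b) ⊗ₜ[K] c -
      (((T 1 : LaurentPolynomial K) • a) ⊗ₜ[K] ((T 1 : LaurentPolynomial K) • b)) ⊗ₜ[K]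
        ((T 1 : LaurentPolynomial K) • c) }

/-!
`A₁ ⊗ A₂ ⊗ A₃` is a commutative ring in which `H` is the ideal generated by `1 - t₁ t₂ t₃`, where
`tⱼ` denotes `t` acting on the `j`-th factor. Modulo this ideal `t₁ t₂ t₃ = 1 = z₁ z₂ z₃`, which
puts `t₁ - z₁` into the ideal `J` generated by `t₂ - z₂` and `t₃ - z₃`. Hence the element in
question lies in `J ^ (k₁ + k₂ + k₃)`, and `J ^ k = 0` once `k ≥ n₂ + n₃ - 1`.
-/

section CommRing

variable {R : Type*} [CommRing R]

theorem sub_mem_span_pair_sub_of_mul_eq_one {t₁ t₂ t₃ z₁ z₂ z₃ : R}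
    (ht : t₁ * t₂ * t₃ = 1) (hz : z₁ * z₂ * z₃ = 1) :
    t₁ - z₁ ∈ Ideal.span {t₂ - z₂, t₃ - z₃} :=
  Ideal.mem_span_pair.mpr ⟨-(t₁ * z₁ * t₃), -(t₁ * z₁ * z₂), by
    linear_combination t₁ * hz - z₁ * ht⟩

theorem span_pair_pow_eq_bot {x y : R} {m n k : ℕ} (hx : x ^ m = 0) (hy : y ^ n = 0)
    (hk : m + n ≤ k + 1) : Ideal.span {x, y} ^ k = ⊥ := by
  have span_singleton_pow_eq_zero {w : R} {l : ℕ} (hw : w ^ l = 0) :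
      Ideal.span {w} ^ l = 0 := by
    rw [Ideal.span_singleton_pow, hw, Ideal.span_singleton_zero, Ideal.zero_eq_bot]
  rw [Ideal.span_insert, ← Ideal.add_eq_sup, ← Ideal.zero_eq_bot]
  exact (Commute.all _ _).add_pow_eq_zero_of_add_le_succ_of_pow_eq_zero
    (span_singleton_pow_eq_zero hx) (span_singleton_pow_eq_zero hy) hk

theorem sub_pow_mul_sub_pow_mul_sub_pow_eq_zero {t₁ t₂ t₃ z₁ z₂ z₃ : R}
    (ht : t₁ * t₂ * t₃ = 1) (hz : z₁ * z₂ * z₃ = 1) {n₂ n₃ k₁ k₂ k₃ : ℕ}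
    (h₂ : (t₂ - z₂) ^ n₂ = 0) (h₃ : (t₃ - z₃) ^ n₃ = 0) (hk : n₂ + n₃ ≤ k₁ + k₂ + k₃ + 1) :
    (t₁ - z₁) ^ k₁ * (t₂ - z₂) ^ k₂ * (t₃ - z₃) ^ k₃ = 0 := by
  let J := Ideal.span {t₂ - z₂, t₃ - z₃}
  have h₁_mem : t₁ - z₁ ∈ J := sub_mem_span_pair_sub_of_mul_eq_one ht hz
  have h₂_mem : t₂ - z₂ ∈ J := Ideal.mem_span_pair.mpr ⟨1, 0, by ring⟩
  have h₃_mem : t₃ - z₃ ∈ J := Ideal.mem_span_pair.mpr ⟨0, 1, by ring⟩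
  rw [← Ideal.mem_bot, ← span_pair_pow_eq_bot h₂ h₃ hk, pow_add, pow_add]
  exact Ideal.mul_mem_mul
    (Ideal.mul_mem_mul (Ideal.pow_mem_pow h₁_mem k₁) (Ideal.pow_mem_pow h₂_mem k₂))
    (Ideal.pow_mem_pow h₃_mem k₃)

theorem sub_pow_mul_sub_pow_mul_sub_pow_mem_span {t₁ t₂ t₃ z₁ z₂ z₃ : R}
    (hz : z₁ * z₂ * z₃ = 1) {n₂ n₃ k₁ k₂ k₃ : ℕ}
    (h₂ : (t₂ - z₂) ^ n₂ = 0) (h₃ : (t₃ - z₃) ^ n₃ = 0) (hk : n₂ + n₃ ≤ k₁ + k₂ + k₃ + 1) :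
    (t₁ - z₁) ^ k₁ * (t₂ - z₂) ^ k₂ * (t₃ - z₃) ^ k₃ ∈ Ideal.span {1 - t₁ * t₂ * t₃} := by
  let π := Ideal.Quotient.mk (Ideal.span {1 - t₁ * t₂ * t₃})
  have ht : π t₁ * π t₂ * π t₃ = 1 := by
    rw [← map_mul, ← map_mul, ← map_one π, eq_comm, Ideal.Quotient.eq]
    exact Ideal.mem_span_singleton_self _
  rw [← Ideal.Quotient.eq_zero_iff_mem]
  simp only [map_mul, map_pow, map_sub]
  exact sub_pow_mul_sub_pow_mul_sub_pow_eq_zero ht (by simpa using congrArg π hz)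
    (by simpa using congrArg π h₂) (by simpa using congrArg π h₃) hk

end CommRing

section TensorProduct

variable {K A₁ A₂ A₃ : Type*} [CommRing K] [CommRing A₁] [CommRing A₂] [CommRing A₃]
  [Algebra K A₁] [Algebra K A₂] [Algebra K A₃]

variable (K) in
/-- The holonomy subspace of `A₁ ⊗ A₂ ⊗ A₃` for commutative algebras `Aⱼ` in which the action
of `t` is multiplication by an element `tⱼ`. -/
def algebraHolonomy (t₁ : A₁) (t₂ : A₂) (t₃ : A₃) : Submodule K ((A₁ ⊗[K] A₂) ⊗[K] A₃) :=
  Submodule.span K { x | ∃ (a : A₁) (b : A₂) (c : A₃),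
    x = (a ⊗ₜ[K] b) ⊗ₜ[K] c - ((t₁ * a) ⊗ₜ[K] (t₂ * b)) ⊗ₜ[K] (t₃ * c) }

theorem one_sub_tmul_mul_mem_algebraHolonomy (t₁ : A₁) (t₂ : A₂) (t₃ : A₃)
    (x : (A₁ ⊗[K] A₂) ⊗[K] A₃) :
    (1 - (t₁ ⊗ₜ[K] t₂) ⊗ₜ[K] t₃) * x ∈ algebraHolonomy K t₁ t₂ t₃ := by
  induction x with
  | zero => simp
  | add x y hx hy => simpa only [mul_add] using add_mem hx hy
  | tmul ab c =>
    induction ab with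
    | zero => simp
    | add ab ab' h h' => simpa only [add_tmul, mul_add] using add_mem h h'
    | tmul a b => exact Submodule.subset_span ⟨a, b, c, by simp [sub_mul]⟩

theorem tmul_sub_algebraMap_pow_mem_algebraHolonomy (t₁ : A₁) {t₂ : A₂} {t₃ : A₃} {z₁ z₂ z₃ : K}
    (hz : z₁ * z₂ * z₃ = 1) {n₂ n₃ k₁ k₂ k₃ : ℕ}
    (h₂ : (t₂ - algebraMap K A₂ z₂) ^ n₂ = 0) (h₃ : (t₃ - algebraMap K A₃ z₃) ^ n₃ = 0)
    (hk : n₂ + n₃ ≤ k₁ + k₂ + k₃ + 1) :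
    (((t₁ - algebraMap K A₁ z₁) ^ k₁) ⊗ₜ[K] ((t₂ - algebraMap K A₂ z₂) ^ k₂)) ⊗ₜ[K]
        ((t₃ - algebraMap K A₃ z₃) ^ k₃) ∈ algebraHolonomy K t₁ t₂ t₃ := by
  let ι₁ : A₁ →ₐ[K] (A₁ ⊗[K] A₂) ⊗[K] A₃ :=
    Algebra.TensorProduct.includeLeft.comp Algebra.TensorProduct.includeLeft
  let ι₂ : A₂ →ₐ[K] (A₁ ⊗[K] A₂) ⊗[K] A₃ :=
    Algebra.TensorProduct.includeLeft.comp Algebra.TensorProduct.includeRight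
  let ι₃ : A₃ →ₐ[K] (A₁ ⊗[K] A₂) ⊗[K] A₃ := Algebra.TensorProduct.includeRight
  have tmul_eq (a : A₁) (b : A₂) (c : A₃) : (a ⊗ₜ[K] b) ⊗ₜ[K] c = ι₁ a * ι₂ b * ι₃ c := by
    simp [ι₁, ι₂, ι₃]
  have hz' := congrArg (algebraMap K ((A₁ ⊗[K] A₂) ⊗[K] A₃)) hz
  have h₂' := congrArg ι₂ h₂
  have h₃' := congrArg ι₃ h₃
  simp only [map_mul, map_one, map_zero, map_pow, map_sub, AlgHom.commutes] at hz' h₂' h₃'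
  obtain ⟨x, hx⟩ := Ideal.mem_span_singleton.mp <|
    sub_pow_mul_sub_pow_mul_sub_pow_mem_span (t₁ := ι₁ t₁) hz' h₂' h₃' hk
  rw [tmul_eq]
  simp only [map_pow, map_sub, AlgHom.commutes]
  rw [hx, ← tmul_eq]
  exact one_sub_tmul_mul_mem_algebraHolonomy t₁ t₂ t₃ x

end TensorProduct

section LaurentPolynomial

variable {K : Type} [Field K]

theorem clsOf_self (p : LaurentPolynomial K) : clsOf K p p = 0 :=
  Ideal.Quotient.eq_zero_iff_mem.mpr (Ideal.mem_span_singleton_self p)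

theorem clsOf_sub_C_pow (p : LaurentPolynomial K) (z : K) (k : ℕ) :
    clsOf K p ((T 1 - C z) ^ k) = (clsOf K p (T 1) - algebraMap K (LQuot K p) z) ^ k :=
  rfl

-- `Trip K p q r` is built on the quotient-module structures, and instance search finds no ring
-- structure on it; the two sides agree only after unfolding these instances.
theorem holSub_eq_algebraHolonomy (p q r : LaurentPolynomial K) :
    holSub K p q r = algebraHolonomy K (clsOf K p (T 1)) (clsOf K q (T 1)) (clsOf K r (T 1)) :=
  rfl

theorem stmt10_general (p : LaurentPolynomial K) {z₁ z₂ z₃ : K} (hz : z₁ * z₂ * z₃ = 1)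
    {n₂ n₃ k₁ k₂ k₃ : ℕ} (hk : n₂ + n₃ ≤ k₁ + k₂ + k₃ + 1) :
    (clsOf K p ((T 1 - C z₁) ^ k₁) ⊗ₜ[K]
        clsOf K ((T 1 - C z₂) ^ n₂) ((T 1 - C z₂) ^ k₂)) ⊗ₜ[K]
      clsOf K ((T 1 - C z₃) ^ n₃) ((T 1 - C z₃) ^ k₃) ∈
    holSub K p ((T 1 - C z₂) ^ n₂) ((T 1 - C z₃) ^ n₃) := by
  rw [holSub_eq_algebraHolonomy, clsOf_sub_C_pow, clsOf_sub_C_pow, clsOf_sub_C_pow]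
  exact tmul_sub_algebraMap_pow_mem_algebraHolonomy _ hz
    ((clsOf_sub_C_pow _ _ _).symm.trans (clsOf_self _))
    ((clsOf_sub_C_pow _ _ _).symm.trans (clsOf_self _)) hk

end LaurentPolynomial

theorem stmt10 (z₁ z₂ z₃ : ℂ) (hz₁ : z₁ ≠ 0) (hz₂ : z₂ ≠ 0) (hz₃ : z₃ ≠ 0)
    (hprod : z₁ * z₂ * z₃ = 1) (n₁ n₂ n₃ : ℕ) (hn₃ : 1 ≤ n₃) (hn₂₃ : n₃ ≤ n₂)
    (hn₁₂ : n₂ ≤ n₁) (k₁ k₂ k₃ : ℕ) (hk : n₂ + n₃ - 1 ≤ k₁ + k₂ + k₃) :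
    (Submodule.Quotient.mk
        ((clsOf ℂ ((T 1 - C z₁) ^ n₁) ((T 1 - C z₁) ^ k₁) ⊗ₜ[ℂ]
            clsOf ℂ ((T 1 - C z₂) ^ n₂) ((T 1 - C z₂) ^ k₂)) ⊗ₜ[ℂ]
          clsOf ℂ ((T 1 - C z₃) ^ n₃) ((T 1 - C z₃) ^ k₃)) :
      Trip ℂ ((T 1 - C z₁) ^ n₁) ((T 1 - C z₂) ^ n₂) ((T 1 - C z₃) ^ n₃) ⧸
        holSub ℂ ((T 1 - C z₁) ^ n₁) ((T 1 - C z₂) ^ n₂) ((T 1 - C z₃) ^ n₃)) = 0 :=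
  (Submodule.Quotient.mk_eq_zero _).mpr (stmt10_general _ hprod (by omega))
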